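/- Let (A,m) be an irreducible multiarrangement of rank 3 with two distinct locally heavy hyperplanes H and L. Then (A,m) is not free. Consequently, a rank-3 multiarrangement with two locally heavy hyperplanes is free if and only if it is reducible. -/

import Mathlib

open scoped Classical
open MvPolynomial

namespace ArrPaper

variable {K : Type*} [Field K] {ℓ : ℕ}

/-- The coordinate ring `S = K[x₁,…,x_ℓ]`. -/
noncomputable abbrev S (K : Type*) [Field K] (ℓ : ℕ) := MvPolynomial (Fin ℓ) K

/-- The linear form associated to a covector `c`. -/
noncomputable def linForm (c : Fin ℓ → K) : S K ℓ :=
  ∑ i, MvPolynomial.C (c i) * MvPolynomial.X i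

/-- The linear functional associated to a covector. -/
noncomputable def toFunc (c : Fin ℓ → K) : (Fin ℓ → K) →ₗ[K] K :=
  ∑ i, c i • LinearMap.proj i

/-- A (central) hyperplane arrangement, given by a finite set of nonzero,
pairwise non-proportional covectors (defining linear forms). -/
structure Arrangement (K : Type*) [Field K] (ℓ : ℕ) where
  hyps : Finset (Fin ℓ → K)
  ne_zero : ∀ c ∈ hyps, c ≠ 0
  nonparallel : ∀ c ∈ hyps, ∀ c' ∈ hyps, c ≠ c' → ∀ t : K, c' ≠ t • c

/-- Derivations of the polynomial ring `S`. -/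
abbrev Der (K : Type*) [Field K] (ℓ : ℕ) := Derivation K (S K ℓ) (S K ℓ)

/-- `θ` is a logarithmic derivation of the multiarrangement `(A, m)`, i.e.
`θ(α_H) ∈ α_H^{m(H)}·S` for all `H ∈ A`. -/
def IsLogDer (A : Arrangement K ℓ) (m : (Fin ℓ → K) → ℕ) (θ : Der K ℓ) : Prop :=
  ∀ c ∈ A.hyps, (linForm c) ^ (m c) ∣ θ (linForm c)

/-- `θ` is homogeneous of polynomial degree `d`: `θ(α)` is homogeneous of degree `d`
for every linear form `α`. -/
def IsHomogOfDeg (θ : Der K ℓ) (d : ℕ) : Prop :=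
  ∀ c : Fin ℓ → K, (θ (linForm c)).IsHomogeneous d

/-- `θ₁, …, θ_ℓ` form a basis of the `S`-module `D(A,m)`. -/
def IsDerBasis (A : Arrangement K ℓ) (m : (Fin ℓ → K) → ℕ) (θ : Fin ℓ → Der K ℓ) : Prop :=
  (∀ i, IsLogDer A m (θ i)) ∧
  ∀ η : Der K ℓ, IsLogDer A m η → ∃! f : Fin ℓ → S K ℓ, η = ∑ i, f i • θ i

/-- `(A,m)` is free with a homogeneous basis of degrees (exponents) `d`. -/
def IsFreeWithExp (A : Arrangement K ℓ) (m : (Fin ℓ → K) → ℕ) (d : Fin ℓ → ℕ) : Prop :=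
  ∃ θ : Fin ℓ → Der K ℓ, (∀ i, IsHomogOfDeg (θ i) (d i)) ∧ IsDerBasis A m θ

/-- `(A,m)` is a free multiarrangement. -/
def IsFree (A : Arrangement K ℓ) (m : (Fin ℓ → K) → ℕ) : Prop :=
  ∃ d : Fin ℓ → ℕ, IsFreeWithExp A m d

/-- `|m|`, the total multiplicity. -/
def msum (A : Arrangement K ℓ) (m : (Fin ℓ → K) → ℕ) : ℕ := ∑ c ∈ A.hyps, m c

/-- The rank of an arrangement: the dimension of the span of its covectors. -/
noncomputable def rank (A : Arrangement K ℓ) : ℕ :=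
  Module.finrank K (Submodule.span K (A.hyps : Set (Fin ℓ → K)))

/-- `A` is reducible: after a linear change of coordinates it is a product of two
arrangements in complementary (nonzero) subspaces.  In terms of covectors: the
covectors split between two complementary nonzero subspaces of the dual space. -/
def Reducible (A : Arrangement K ℓ) : Prop :=
  ∃ W₁ W₂ : Submodule K (Fin ℓ → K), W₁ ≠ ⊥ ∧ W₂ ≠ ⊥ ∧ W₁ ⊓ W₂ = ⊥ ∧ W₁ ⊔ W₂ = ⊤ ∧
    ∀ c ∈ A.hyps, c ∈ W₁ ∨ c ∈ W₂

/-- The hyperplanes of the localization at a flat; the flat of codimension `r` is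
encoded by the `r`-dimensional subspace `U` of the dual space spanned by the
covectors of the hyperplanes containing it. -/
noncomputable def locHyps (A : Arrangement K ℓ) (U : Submodule K (Fin ℓ → K)) :
    Finset (Fin ℓ → K) :=
  A.hyps.filter (· ∈ U)

/-- `U` encodes a flat of `A` of codimension `r` (an element of `L_r(A)`). -/
def IsFlatOfRank (A : Arrangement K ℓ) (U : Submodule K (Fin ℓ → K)) (r : ℕ) : Prop :=
  Module.finrank K U = r ∧ Submodule.span K (locHyps A U : Set (Fin ℓ → K)) = U

/-- The localization `A_X` of `A` at the flat encoded by `U`. -/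
noncomputable def localize (A : Arrangement K ℓ) (U : Submodule K (Fin ℓ → K)) :
    Arrangement K ℓ where
  hyps := locHyps A U
  ne_zero := fun c hc => A.ne_zero c (Finset.mem_filter.mp hc).1
  nonparallel := fun c hc c' hc' =>
    A.nonparallel c (Finset.mem_filter.mp hc).1 c' (Finset.mem_filter.mp hc').1

/-- `H₀` (given by covector `c₀`) is a heavy hyperplane of `(A,m)`. -/
def IsHeavy (A : Arrangement K ℓ) (m : (Fin ℓ → K) → ℕ) (c₀ : Fin ℓ → K) : Prop :=
  c₀ ∈ A.hyps ∧ (∑ c ∈ A.hyps.erase c₀, m c) ≤ m c₀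

/-- `H₀` (given by covector `c₀`) is a locally heavy hyperplane of `(A,m)`. -/
def IsLocallyHeavy (A : Arrangement K ℓ) (m : (Fin ℓ → K) → ℕ) (c₀ : Fin ℓ → K) : Prop :=
  c₀ ∈ A.hyps ∧ ∀ U : Submodule K (Fin ℓ → K), IsFlatOfRank A U 2 → c₀ ∈ U →
    3 ≤ (locHyps A U).card → (∑ c ∈ (locHyps A U).erase c₀, m c) ≤ m c₀

/-- `b` is the second Betti number of the rank-2 localization of `(A,m)` at `U`:
the product of the nonzero exponents of this free rank-2 multiarrangement. -/
def IsLocalB2 (A : Arrangement K ℓ) (m : (Fin ℓ → K) → ℕ)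
    (U : Submodule K (Fin ℓ → K)) (b : ℕ) : Prop :=
  ∃ d : Fin ℓ → ℕ, IsFreeWithExp (localize A U) m d ∧
    b = ∏ i ∈ Finset.univ.filter (fun i => d i ≠ 0), d i

/-- `b` is the second Betti number `b₂(A,m)` of the multiarrangement `(A,m)`. -/
def IsB2 (A : Arrangement K ℓ) (m : (Fin ℓ → K) → ℕ) (b : ℕ) : Prop :=
  ∃ bloc : Submodule K (Fin ℓ → K) → ℕ,
    (∀ U, IsFlatOfRank A U 2 → IsLocalB2 A m U (bloc U)) ∧
    b = ∑ᶠ U ∈ {U : Submodule K (Fin ℓ → K) | IsFlatOfRank A U 2}, bloc U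

/-- The second Betti number of a simple arrangement:
`b₂(A) = Σ_{X ∈ L₂(A)} (|A_X| - 1)`. -/
noncomputable def b2Simple (A : Arrangement K ℓ) : ℕ :=
  ∑ᶠ U ∈ {U : Submodule K (Fin ℓ → K) | IsFlatOfRank A U 2}, ((locHyps A U).card - 1)

/-- The Euler–Ziegler multiplicity of the restricted hyperplane `H₀ ∩ ker(c)` of
`A^{H₀}`: `m^{H₀}(X) = |m_X| - m(H₀)`. -/
noncomputable def EZmult (A : Arrangement K ℓ) (m : (Fin ℓ → K) → ℕ)
    (c₀ c : Fin ℓ → K) : ℕ :=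
  (∑ c' ∈ A.hyps.filter (· ∈ Submodule.span K ({c₀, c} : Set (Fin ℓ → K))), m c') - m c₀

/-- Two covectors are parallel (define the same hyperplane). -/
def Parallel {n : ℕ} (b b' : Fin n → K) : Prop := ∃ t : K, t ≠ 0 ∧ b' = t • b

/-- The covector on `K^n` obtained by restricting the covector `c` on `K^{n+1}` to the
hyperplane `ker c₀`, transported by the linear isomorphism `e : ker c₀ ≃ K^n`. -/
noncomputable def resCov {n : ℕ} (c₀ : Fin (n+1) → K)
    (e : ↥(LinearMap.ker (toFunc c₀)) ≃ₗ[K] (Fin n → K)) (c : Fin (n+1) → K) :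
    Fin n → K :=
  fun j => toFunc c ((e.symm (Pi.single j 1) : ↥(LinearMap.ker (toFunc c₀))) : Fin (n+1) → K)

/-- `(B, mB)` is (a model, in coordinates, of) the Euler–Ziegler restriction
`(A^{H₀}, m^{H₀})` of `(A,m)` to the hyperplane `H₀ = ker c₀ ∈ A`. -/
def IsEZRes {n : ℕ} (A : Arrangement K (n+1)) (m : (Fin (n+1) → K) → ℕ)
    (c₀ : Fin (n+1) → K) (B : Arrangement K n) (mB : (Fin n → K) → ℕ) : Prop :=
  c₀ ∈ A.hyps ∧
  ∃ e : ↥(LinearMap.ker (toFunc c₀)) ≃ₗ[K] (Fin n → K),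
    (∀ c ∈ A.hyps.erase c₀, ∃ b ∈ B.hyps,
        Parallel b (resCov c₀ e c) ∧ mB b = EZmult A m c₀ c) ∧
    (∀ b ∈ B.hyps, ∃ c ∈ A.hyps.erase c₀, Parallel b (resCov c₀ e c))

/-- A combinatorial equivalence between two arrangements: a bijection between the
hyperplanes inducing an isomorphism of intersection lattices (it preserves the rank
of every subset of hyperplanes). -/
def CombEquiv (A A' : Arrangement K ℓ) : Prop :=
  ∃ φ : (Fin ℓ → K) → (Fin ℓ → K), Set.BijOn φ ↑A.hyps ↑A'.hyps ∧
    ∀ T : Finset (Fin ℓ → K), T ⊆ A.hyps →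
      Module.finrank K (Submodule.span K (T : Set (Fin ℓ → K))) =
      Module.finrank K (Submodule.span K ((T.image φ) : Set (Fin ℓ → K)))

lemma linForm_add (c c' : Fin ℓ → K) : linForm (c + c') = linForm c + linForm c' := by
  simp [linForm, add_mul, Finset.sum_add_distrib]

lemma linForm_zero : linForm (0 : Fin ℓ → K) = 0 := by
  simp [linForm]

lemma linForm_smul (t : K) (c : Fin ℓ → K) : linForm (t • c) = C t * linForm c := by
  simp [linForm, mul_assoc, Finset.mul_sum]

lemma linForm_sub (c c' : Fin ℓ → K) : linForm (c - c') = linForm c - linForm c' := by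
  simp [linForm, sub_mul, Finset.sum_sub_distrib]

lemma linForm_isHomogeneous (c : Fin ℓ → K) : (linForm c).IsHomogeneous 1 :=
  IsHomogeneous.sum _ _ _ fun _ _ => isHomogeneous_C_mul_X _ _

lemma linForm_pow_isHomogeneous (c : Fin ℓ → K) (n : ℕ) : (linForm c ^ n).IsHomogeneous n := by
  simpa using (linForm_isHomogeneous c).pow n

lemma aeval_linForm {R : Type*} [CommRing R] [Algebra K R] (g : Fin ℓ → R) (c : Fin ℓ → K) :
    aeval g (linForm c) = ∑ i, algebraMap K R (c i) * g i := by
  simp [linForm]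

lemma linForm_single (i : Fin ℓ) : linForm (Pi.single i 1 : Fin ℓ → K) = X i := by
  rw [linForm, Finset.sum_eq_single i]
  · simp
  · intro j _ hj
    simp [hj]
  · simp

lemma linForm_injective : Function.Injective (linForm : (Fin ℓ → K) → S K ℓ) := by
  intro c c' h
  ext i
  have := congrArg (aeval (Pi.single i 1 : Fin ℓ → K)) h
  simpa [aeval_linForm, Pi.single_apply] using this

lemma linForm_ne_zero {c : Fin ℓ → K} (hc : c ≠ 0) : linForm c ≠ 0 := by
  intro h
  exact hc (linForm_injective (h.trans linForm_zero.symm))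

lemma linForm_prime {c : Fin ℓ → K} (hc : c ≠ 0) : Prime (linForm c) := by
  refine Irreducible.prime (irreducible_of_totalDegree_eq_one
    ((linForm_isHomogeneous c).totalDegree (linForm_ne_zero hc)) fun x hx => ?_)
  refine (isUnit_iff_ne_zero.mpr ?_)
  rintro rfl
  apply linForm_ne_zero hc
  ext d
  simpa using hx d

/-- A linear form divides another one only if the covectors are proportional. -/
lemma exists_smul_of_linForm_dvd {c c' : Fin ℓ → K} (h : linForm c ∣ linForm c') :
    ∃ t : K, c' = t • c := by
  by_cases hc' : c' = 0
  · exact ⟨0, by simp [hc']⟩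
  obtain ⟨g, hg⟩ := h
  have hne := linForm_ne_zero hc'
  have hc : c ≠ 0 := by
    rintro rfl
    exact hne (by rw [hg, linForm_zero, zero_mul])
  have hg0 : g ≠ 0 := by
    rintro rfl
    exact hne (by simp [hg])
  have hdeg := congrArg totalDegree hg
  rw [totalDegree_mul_of_isDomain (linForm_ne_zero hc) hg0,
    (linForm_isHomogeneous c).totalDegree (linForm_ne_zero hc),
    (linForm_isHomogeneous c').totalDegree hne] at hdeg
  have hg' : g = C (coeff 0 g) := totalDegree_eq_zero_iff_eq_C.mp (by omega)
  refine ⟨coeff 0 g, linForm_injective ?_⟩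
  rw [linForm_smul, hg, ← hg', mul_comm]

lemma linForm_isRelPrime {c c' : Fin ℓ → K} (hc : c ≠ 0) (h : ∀ t : K, c' ≠ t • c) :
    IsRelPrime (linForm c) (linForm c') :=
  (linForm_prime hc).irreducible.isRelPrime_iff_not_dvd.mpr fun hd =>
    let ⟨t, ht⟩ := exists_smul_of_linForm_dvd hd
    h t ht

/-- Divisibility by a power of a linear form passes to homogeneous components. -/
lemma linForm_pow_dvd_homogeneousComponent {c : Fin ℓ → K} {k : ℕ} {f : S K ℓ}
    (h : linForm c ^ k ∣ f) (n : ℕ) : linForm c ^ k ∣ homogeneousComponent n f := by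
  rw [← Ideal.mem_span_singleton] at h ⊢
  let : GradedAlgebra (homogeneousSubmodule (Fin ℓ) K) := gradedAlgebra
  refine homogeneousComponent_mem_of_mem ?_ h n
  refine Ideal.homogeneous_span _ _ ?_
  rintro x rfl
  exact ⟨k, linForm_pow_isHomogeneous c k⟩

/-- A form of degree less than `k` divisible by the `k`-th power of a linear form vanishes. -/
lemma eq_zero_of_linForm_pow_dvd {c : Fin ℓ → K} (hc : c ≠ 0) {k n : ℕ} {f : S K ℓ}
    (h : linForm c ^ k ∣ f) (hf : f.IsHomogeneous n) (hn : n < k) : f = 0 := by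
  by_contra hf0
  obtain ⟨g, rfl⟩ := h
  have h1 := hf.totalDegree hf0
  rw [totalDegree_mul_of_isDomain (pow_ne_zero _ (linForm_ne_zero hc)) (right_ne_zero_of_mul hf0),
    (linForm_pow_isHomogeneous c k).totalDegree (pow_ne_zero _ (linForm_ne_zero hc))] at h1
  omega

lemma Derivation_linForm (θ : Der K ℓ) (c : Fin ℓ → K) :
    θ (linForm c) = ∑ i, C (c i) * θ (X i) := by
  rw [linForm, map_sum]
  refine Finset.sum_congr rfl fun i _ => ?_
  rw [Derivation.leibniz, ← algebraMap_eq, Derivation.map_algebraMap]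
  simp

lemma der_ext {θ η : Der K ℓ} (h : ∀ c, θ (linForm c) = η (linForm c)) : θ = η := by
  refine derivation_ext fun i => ?_
  rw [← linForm_single]
  exact h _

/-- The derivation with prescribed values on linear forms. -/
noncomputable def derOf (φ : (Fin ℓ → K) →ₗ[K] S K ℓ) : Der K ℓ :=
  mkDerivation K fun i => φ (Pi.single i 1)

lemma derOf_linForm (φ : (Fin ℓ → K) →ₗ[K] S K ℓ) (c : Fin ℓ → K) :
    derOf φ (linForm c) = φ c := by
  rw [Derivation_linForm]
  conv_rhs => rw [pi_eq_sum_univ' c, map_sum]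
  refine Finset.sum_congr rfl fun i _ => ?_
  rw [map_smul, derOf, mkDerivation_X, smul_eq_C_mul]

/-- The values of a derivation on linear forms, as a linear map on covectors. -/
noncomputable def valuesOf (θ : Der K ℓ) : (Fin ℓ → K) →ₗ[K] S K ℓ where
  toFun c := θ (linForm c)
  map_add' c c' := by rw [linForm_add, map_add]
  map_smul' t c := by
    rw [linForm_smul, ← smul_eq_C_mul, θ.map_smul, RingHom.id_apply]

lemma valuesOf_apply (θ : Der K ℓ) (c : Fin ℓ → K) : valuesOf θ c = θ (linForm c) := rfl

/-- Homogeneous Hermite interpolation in two variables `x` and `y`. -/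
lemma exists_homogeneous_interpolation {ι R : Type*} [CommRing R] [Algebra K R] (T : Finset ι)
    (t : ι → K) (ht : Set.InjOn t T) (m : ι → ℕ) {n : ℕ} (hn : ∑ i ∈ T, m i ≤ n + 1) (x y : R) :
    ∃ g : R, ∀ i ∈ T, (x + t i • y) ^ m i ∣ g + t i • y ^ n := by
  have hcop : Pairwise (Function.onFun IsCoprime fun i : T =>
      Ideal.span {(Polynomial.X - Polynomial.C (-t i)) ^ m i}) := by
    intro i j hij
    rw [Function.onFun, Ideal.isCoprime_span_singleton_iff]
    refine IsCoprime.pow (Polynomial.isCoprime_X_sub_C_of_isUnit_sub (sub_ne_zero_of_ne ?_).isUnit)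
    exact fun h => hij (Subtype.ext (ht i.2 j.2 (neg_injective h)))
  obtain ⟨p, hp⟩ := Ideal.exists_forall_sub_mem_ideal hcop fun i => Polynomial.C (-t i)
  set M : Polynomial K := ∏ i ∈ T, (Polynomial.X - Polynomial.C (-t i)) ^ m i with hM
  have hMmonic : M.Monic :=
    Polynomial.monic_prod_of_monic _ _ fun i _ => (Polynomial.monic_X_sub_C _).pow _
  have hMdeg : M.natDegree = ∑ i ∈ T, m i := by
    rw [hM, Polynomial.natDegree_prod_of_monic _ _ fun i _ => (Polynomial.monic_X_sub_C _).pow _]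
    simp
  set r := p %ₘ M with hr
  have hrdeg : r.natDegree ≤ n := by
    by_cases h0 : r = 0
    · simp [h0]
    · have h1 := Polynomial.degree_modByMonic_lt p hMmonic
      have h2 := Polynomial.natDegree_lt_natDegree h0 h1
      omega
  refine ⟨aeval ![x, y] (r.homogenize n), fun i hi => ?_⟩
  have hdvd : (Polynomial.X - Polynomial.C (-t i)) ^ m i ∣ r + Polynomial.C (t i) := by
    have h1 := hp ⟨i, hi⟩
    rw [Ideal.mem_span_singleton] at h1
    have h2 : (Polynomial.X - Polynomial.C (-t i)) ^ m i ∣ M :=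
      Finset.dvd_prod_of_mem (fun i => (Polynomial.X - Polynomial.C (-t i)) ^ m i) hi
    have h3 : r + Polynomial.C (t i) = (p - Polynomial.C (-t i)) - M * (p /ₘ M) := by
      have := Polynomial.modByMonic_add_div p M
      rw [← hr] at this
      linear_combination this + Polynomial.C_neg (a := t i)
    rw [h3]
    exact dvd_sub h1 (h2.mul_right _)
  obtain ⟨s, hs⟩ := hdvd
  have hval : aeval ![x, y] (r.homogenize n) + t i • y ^ n =
      aeval ![x, y] ((r + Polynomial.C (t i)).homogenize n) := by
    simp [Algebra.smul_def]
  rw [hval, hs]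
  by_cases hs0 : s = 0
  · simp [hs0]
  have hpow : ((Polynomial.X - Polynomial.C (-t i)) ^ m i).natDegree = m i := by simp
  have hdeg : m i + s.natDegree ≤ n := by
    have h1 := Polynomial.natDegree_mul (pow_ne_zero (m i) (Polynomial.X_sub_C_ne_zero (-t i))) hs0
    rw [hpow, ← hs] at h1
    rw [← h1]
    exact (Polynomial.natDegree_add_C).trans_le hrdeg
  obtain ⟨k, rfl⟩ := Nat.exists_eq_add_of_le (show m i ≤ n by omega)
  rw [Polynomial.homogenize_mul _ _ hpow.le (by omega),
    Polynomial.homogenize_eq_of_isHomogeneous (q := (X 0 + C (t i) * X 1) ^ m i)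
      (by simpa using ((isHomogeneous_X K 0).add (isHomogeneous_C_mul_X (t i) 1)).pow (m i))
      (by simp), map_mul]
  refine Dvd.dvd.mul_right ?_ _
  simp [Algebra.smul_def]

/-- A projection of the coordinate ring whose kernel is generated by a given linear form. -/
lemma exists_projection {c : Fin ℓ → K} (hc : c ≠ 0) :
    ∃ π : S K ℓ →ₐ[K] S K ℓ, (∀ f, linForm c ∣ f - π f) ∧ (π (linForm c) = 0) ∧
      ∀ c', ∃ t : K, π (linForm c') = linForm (c' - t • c) := by
  obtain ⟨j, hj⟩ := Function.ne_iff.mp hc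
  have hj : c j ≠ 0 := hj
  let π : S K ℓ →ₐ[K] S K ℓ :=
    aeval fun i => linForm (Pi.single i 1 - ((Pi.single j (c j)⁻¹ : Fin ℓ → K) i) • c)
  have hπ : ∀ c', π (linForm c') = linForm (c' - (c' j * (c j)⁻¹) • c) := by
    intro c'
    simp only [π, aeval_linForm, linForm_sub, linForm_smul, mul_sub, Finset.sum_sub_distrib,
      linForm_single, algebraMap_eq, ← mul_assoc, ← Finset.sum_mul]
    congr 2
    simp only [← map_mul, ← map_sum, Pi.single_apply, mul_ite, mul_zero]
    simp
  refine ⟨π, fun f => ?_, ?_, fun c' => ⟨_, hπ c'⟩⟩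
  · have h : (Ideal.Quotient.mkₐ K (Ideal.span {linForm c})).comp π =
        Ideal.Quotient.mkₐ K (Ideal.span {linForm c}) := by
      refine algHom_ext fun i => ?_
      rw [AlgHom.comp_apply, Ideal.Quotient.mkₐ_eq_mk, Ideal.Quotient.mk_eq_mk_iff_sub_mem,
        Ideal.mem_span_singleton, ← linForm_single, hπ, linForm_sub,
        sub_sub_cancel_left, linForm_smul]
      exact (Dvd.intro_left _ rfl).neg_right
    have h2 := (DFunLike.congr_fun h f).symm
    rwa [AlgHom.comp_apply, Ideal.Quotient.mkₐ_eq_mk, Ideal.Quotient.mk_eq_mk_iff_sub_mem,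
        Ideal.mem_span_singleton] at h2
  · rw [hπ, mul_inv_cancel₀ hj]
    simp [linForm_zero]

/-- Elements that are proportional to the complementary products of pairwise coprime elements
are a common multiple of these products. -/
lemma exists_common_factor {R ι : Type*} [CommRing R] [IsDomain R] [DecompositionMonoid R]
    [DecidableEq ι] {s : Finset ι} (hs : s.Nonempty) {P a : ι → R}
    (hP : (s : Set ι).Pairwise (Function.onFun IsRelPrime P)) (hP0 : ∀ i ∈ s, P i ≠ 0)
    (h : ∀ i ∈ s, ∀ j ∈ s, (∏ k ∈ s.erase j, P k) * a i = (∏ k ∈ s.erase i, P k) * a j) :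
    ∃ v, ∀ i ∈ s, a i = (∏ k ∈ s.erase i, P k) * v := by
  have hdvd : ∀ i ∈ s, (∏ k ∈ s.erase i, P k) ∣ a i := by
    intro i hi
    refine Finset.prod_dvd_of_isRelPrime (hP.mono (by simp)) fun j hj => ?_
    obtain ⟨hji, hj⟩ := Finset.mem_erase.mp hj
    refine IsRelPrime.dvd_of_dvd_mul_left (y := ∏ k ∈ s.erase j, P k)
      (IsRelPrime.prod_right fun k hk => ?_) ?_
    · obtain ⟨hkj, hk⟩ := Finset.mem_erase.mp hk
      exact hP hj hk hkj.symm
    · rw [h i hi j hj]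
      exact (Finset.dvd_prod_of_mem P (Finset.mem_erase.mpr ⟨hji, hj⟩)).mul_right _
  have hne : ∀ i ∈ s, (∏ k ∈ s.erase i, P k) ≠ 0 := fun i _ =>
    Finset.prod_ne_zero_iff.mpr fun k hk => hP0 k (Finset.mem_of_mem_erase hk)
  obtain ⟨j, hj⟩ := hs
  obtain ⟨v, hv⟩ := hdvd j hj
  refine ⟨v, fun i hi => mul_left_cancel₀ (hne j hj) ?_⟩
  rw [h i hi j hj, hv]
  ring

lemma linearIndependent_pair (A : Arrangement K ℓ) {c c' : Fin ℓ → K} (hc : c ∈ A.hyps)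
    (hc' : c' ∈ A.hyps) (h : c ≠ c') : LinearIndependent K ![c, c'] :=
  (LinearIndependent.pair_iff' (A.ne_zero c hc)).mpr fun t =>
    (A.nonparallel c hc c' hc' h t).symm

lemma isFlatOfRank_span_pair (A : Arrangement K ℓ) {c c' : Fin ℓ → K} (hc : c ∈ A.hyps)
    (hc' : c' ∈ A.hyps) (h : c ≠ c') :
    IsFlatOfRank A (Submodule.span K {c, c'}) 2 := by
  constructor
  · have := finrank_span_eq_card (linearIndependent_pair A hc hc' h)
    rwa [Matrix.range_cons, Matrix.range_cons, Matrix.range_empty, Set.union_empty,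
      Set.singleton_union, Fintype.card_fin] at this
  · refine le_antisymm (Submodule.span_le.mpr fun x hx => ?_) (Submodule.span_mono ?_)
    · exact (Finset.mem_filter.mp hx).2
    · rintro x (rfl | rfl)
      · exact Finset.mem_filter.mpr ⟨hc, Submodule.subset_span (by simp)⟩
      · exact Finset.mem_filter.mpr ⟨hc', Submodule.subset_span (by simp)⟩

/-- A functional that vanishes at one of two independent vectors and takes the value `1`
at the other one. -/
lemma exists_functional {V : Type*} [AddCommGroup V] [Module K V] {p : Submodule K V} {v : V}
    (hv : v ∉ p) : ∃ f : V →ₗ[K] K, f v = 1 ∧ ∀ x ∈ p, f x = 0 := by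
  obtain ⟨f, hf, hp⟩ := Submodule.exists_le_ker_of_notMem hv
  exact ⟨(f v)⁻¹ • f, by simp [hf], fun x hx => by simp [LinearMap.mem_ker.mp (hp hx)]⟩

/-- Along a rank-two flat in a locally heavy hyperplane there is a derivation of the expected
degree after lowering the multiplicity of that hyperplane by one. -/
lemma exists_local_der (A : Arrangement K ℓ) (m : (Fin ℓ → K) → ℕ) {c₀ c₁ : Fin ℓ → K}
    (h₀ : IsLocallyHeavy A m c₀) (hm : 0 < m c₀) (h₁ : c₁ ∈ A.hyps) (hne : c₁ ≠ c₀) :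
    ∃ ψ : Der K ℓ, ψ (linForm c₀) = linForm c₀ ^ (m c₀ - 1) ∧
      ∀ c ∈ (locHyps A (Submodule.span K {c₀, c₁})).erase c₀,
        linForm c ^ m c ∣ ψ (linForm c) := by
  set U := Submodule.span K {c₀, c₁} with hU
  set T := (locHyps A U).erase c₀ with hT
  have hTmem : ∀ c ∈ T, c ∈ A.hyps ∧ c ≠ c₀ ∧ c ∈ U := fun c hc => by
    simp only [hT, locHyps, Finset.mem_erase, Finset.mem_filter] at hc
    tauto
  have hrep : ∀ c ∈ T, ∃ s t : K, s ≠ 0 ∧ c = s • (c₁ + t • c₀) := by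
    intro c hc
    obtain ⟨hcA, hc0, hcU⟩ := hTmem c hc
    obtain ⟨a, b, hab⟩ := Submodule.mem_span_pair.mp hcU
    have hb : b ≠ 0 := by
      rintro rfl
      exact A.nonparallel c₀ h₀.1 c hcA hc0.symm a (by simp [← hab])
    refine ⟨b, b⁻¹ * a, hb, ?_⟩
    rw [smul_add, smul_smul, mul_inv_cancel_left₀ hb, ← hab, add_comm]
  choose! s t hs hst using hrep
  have hinj : Set.InjOn t T := by
    intro c hc c' hc' htt
    by_contra hcc
    refine A.nonparallel c (hTmem c hc).1 c' (hTmem c' hc').1 hcc (s c' * (s c)⁻¹) ?_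
    have h1 : (s c)⁻¹ • c = c₁ + t c • c₀ := (inv_smul_eq_iff₀ (hs c hc)).mpr (hst c hc)
    rw [mul_smul, h1, htt]
    exact hst c' hc'
  have hinterp : ∃ g : S K ℓ, ∀ c ∈ T,
      (linForm c₁ + t c • linForm c₀) ^ m c ∣ g + t c • linForm c₀ ^ (m c₀ - 1) := by
    by_cases hcard : T.card ≤ 1
    · rcases T.eq_empty_or_nonempty with h | ⟨c, hc⟩
      · exact ⟨0, by simp [h]⟩
      · refine ⟨-(t c • linForm c₀ ^ (m c₀ - 1)), fun c' hc' => ?_⟩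
        rw [Finset.card_le_one.mp hcard c' hc' c hc]
        simp
    · refine exists_homogeneous_interpolation T t hinj m ?_ _ _
      have hmem : c₀ ∈ locHyps A U :=
        Finset.mem_filter.mpr ⟨h₀.1, Submodule.subset_span (by simp)⟩
      have hcard' : T.card + 1 = (locHyps A U).card := Finset.card_erase_add_one hmem
      have hle : ∑ c ∈ T, m c ≤ m c₀ := h₀.2 U (isFlatOfRank_span_pair A h₀.1 h₁ hne.symm)
        (Submodule.subset_span (by simp)) (by omega)
      omega
  obtain ⟨g, hg⟩ := hinterp
  obtain ⟨f₀, hf₀, hf₀'⟩ := exists_functional (p := Submodule.span K {c₁}) (v := c₀) fun h => by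
    obtain ⟨a, ha⟩ := Submodule.mem_span_singleton.mp h
    exact A.nonparallel c₁ h₁ c₀ h₀.1 hne a ha.symm
  obtain ⟨f₁, hf₁, hf₁'⟩ := exists_functional (p := Submodule.span K {c₀}) (v := c₁) fun h => by
    obtain ⟨a, ha⟩ := Submodule.mem_span_singleton.mp h
    exact A.nonparallel c₀ h₀.1 c₁ h₁ hne.symm a ha.symm
  replace hf₀' := hf₀' c₁ (Submodule.mem_span_singleton_self _)
  replace hf₁' := hf₁' c₀ (Submodule.mem_span_singleton_self _)
  refine ⟨derOf (f₀.smulRight (linForm c₀ ^ (m c₀ - 1)) + f₁.smulRight g), ?_, fun c hc => ?_⟩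
  · simp [derOf_linForm, hf₀, hf₁']
  · have h1 : linForm c = C (s c) * (linForm c₁ + t c • linForm c₀) := by
      conv_lhs => rw [hst c hc]
      rw [linForm_smul, linForm_add, linForm_smul, smul_eq_C_mul]
    have h2 : derOf (f₀.smulRight (linForm c₀ ^ (m c₀ - 1)) + f₁.smulRight g) (linForm c) =
        C (s c) * (g + t c • linForm c₀ ^ (m c₀ - 1)) := by
      rw [derOf_linForm]
      conv_lhs => rw [hst c hc]
      simp [hf₀, hf₀', hf₁, hf₁', smul_eq_C_mul]
      ring
    rw [h2, h1, mul_pow]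
    have hu : IsUnit (C (s c) : S K ℓ) := (isUnit_iff_ne_zero.mpr (hs c hc)).map C
    exact ((hu.pow _).mul_left_dvd).mpr ((hg c hc).mul_left _)

lemma span_pair_eq_of_mem {c₀ c₁ c : Fin ℓ → K} (hc : c ∈ Submodule.span K {c₀, c₁})
    (hpar : ∀ t : K, c ≠ t • c₀) : Submodule.span K {c₀, c} = Submodule.span K {c₀, c₁} := by
  obtain ⟨a, b, hab⟩ := Submodule.mem_span_pair.mp hc
  have hb : b ≠ 0 := by
    rintro rfl
    exact hpar a (by simp [← hab])
  refine le_antisymm (Submodule.span_le.mpr ?_) (Submodule.span_le.mpr ?_)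
  · rintro x (rfl | rfl)
    · exact Submodule.subset_span (by simp)
    · exact hc
  · rintro x (rfl | rfl)
    · exact Submodule.subset_span (by simp)
    · refine Submodule.mem_span_pair.mpr ⟨-(b⁻¹ * a), b⁻¹, ?_⟩
      rw [← hab, smul_add, smul_smul, smul_smul, inv_mul_cancel₀ hb, ← add_assoc, ← add_smul]
      simp

lemma exists_smul_eq_of_forall_dvd {θ : Der K ℓ} {f : S K ℓ}
    (h : ∀ c, f ∣ θ (linForm c)) : ∃ η : Der K ℓ, θ = f • η := by
  choose g hg using h
  refine ⟨mkDerivation K fun i => g (Pi.single i 1), derivation_ext fun i => ?_⟩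
  rw [Derivation.smul_apply, mkDerivation_X, smul_eq_mul, ← hg, linForm_single]

lemma der_sum_smul_apply {ι : Type*} (s : Finset ι) (f : ι → S K ℓ) (θ : ι → Der K ℓ)
    (x : S K ℓ) : (∑ i ∈ s, f i • θ i) x = ∑ i ∈ s, f i * θ i x := by
  induction s using Finset.induction_on with
  | empty => simp
  | insert i s hi ih =>
    rw [Finset.sum_insert hi, Finset.sum_insert hi, Derivation.add_apply, ih,
      Derivation.smul_apply, smul_eq_mul]

lemma IsLogDer.sum_smul {A : Arrangement K ℓ} {m : (Fin ℓ → K) → ℕ} {ι : Type*} (s : Finset ι)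
    {θ : ι → Der K ℓ} (h : ∀ i ∈ s, IsLogDer A m (θ i)) (f : ι → S K ℓ) :
    IsLogDer A m (∑ i ∈ s, f i • θ i) := by
  intro c hc
  rw [der_sum_smul_apply]
  exact Finset.dvd_sum fun i hi => (h i hi c hc).mul_left _

/-- If a multiarrangement is free, lowering the multiplicity of a locally heavy hyperplane by one
produces a homogeneous logarithmic derivation whose value on the linear form of that hyperplane
is the smallest possible power. -/
lemma exists_der_of_isFree {A : Arrangement K ℓ} {m : (Fin ℓ → K) → ℕ} {c₀ : Fin ℓ → K}
    (h₀ : IsLocallyHeavy A m c₀) (hm : 0 < m c₀) (hex : (A.hyps.erase c₀).Nonempty)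
    (hfree : IsFree A m) :
    ∃ η : Der K ℓ, IsHomogOfDeg η (m c₀ - 1) ∧ η (linForm c₀) = linForm c₀ ^ (m c₀ - 1) ∧
      ∀ c ∈ A.hyps, c ≠ c₀ → linForm c ^ m c ∣ η (linForm c) := by
  obtain ⟨d, θ, -, hθ, hbasis⟩ := hfree
  have hc₀ : c₀ ≠ 0 := A.ne_zero c₀ h₀.1
  have hy : Prime (linForm c₀) := linForm_prime hc₀
  obtain ⟨b, hb⟩ : ∃ b, m c₀ = b + 1 := ⟨m c₀ - 1, by omega⟩
  obtain ⟨π, hπ, hπ0, hπlin⟩ := exists_projection hc₀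
  have hπdvd : ∀ f, π f = 0 → linForm c₀ ∣ f := fun f hf => by simpa [hf] using hπ f
  have hππ : ∀ f, π (π f) = π f := fun f => by
    obtain ⟨g, hg⟩ := hπ f
    have := congrArg π hg
    rw [map_sub, map_mul, hπ0, zero_mul, sub_eq_zero] at this
    exact this.symm
  have hnpar : ∀ c ∈ A.hyps, c ≠ c₀ → ∀ t : K, c ≠ t • c₀ := fun c hc hne =>
    A.nonparallel c₀ h₀.1 c hc hne.symm
  -- the rank-two flats contained in the hyperplane
  set s : Finset (Submodule K (Fin ℓ → K)) :=
    (A.hyps.erase c₀).image fun c => Submodule.span K {c₀, c} with hs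
  have hlocal : ∀ U ∈ s, ∃ ψ : Der K ℓ, ψ (linForm c₀) = linForm c₀ ^ b ∧
      ∀ c ∈ (locHyps A U).erase c₀, linForm c ^ m c ∣ ψ (linForm c) := by
    intro U hU
    obtain ⟨c₁, hc₁, rfl⟩ := Finset.mem_image.mp hU
    obtain ⟨hne, hc₁⟩ := Finset.mem_erase.mp hc₁
    obtain ⟨ψ, h1, h2⟩ := exists_local_der A m h₀ hm hc₁ hne
    exact ⟨ψ, by rw [h1, hb, Nat.add_sub_cancel], h2⟩
  choose! ψ hψ₀ hψ using hlocal
  have hTmem : ∀ U c, c ∈ (locHyps A U).erase c₀ → c ≠ c₀ ∧ c ∈ A.hyps ∧ c ∈ U := by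
    intro U c hc
    simpa [locHyps] using hc
  have hspan : ∀ U ∈ s, ∀ c ∈ (locHyps A U).erase c₀, Submodule.span K {c₀, c} = U := by
    intro U hU c hc
    obtain ⟨c₁, -, rfl⟩ := Finset.mem_image.mp hU
    obtain ⟨hne, hcA, hcU⟩ := hTmem _ c hc
    exact span_pair_eq_of_mem hcU (hnpar c hcA hne)
  set Q : Submodule K (Fin ℓ → K) → S K ℓ :=
    fun U => ∏ c ∈ (locHyps A U).erase c₀, linForm c ^ m c with hQ
  set q : Submodule K (Fin ℓ → K) → S K ℓ := fun U => ∏ V ∈ s.erase U, Q V with hq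
  have hπform : ∀ c ∈ A.hyps, c ≠ c₀ → π (linForm c) ≠ 0 := by
    intro c hcA hne h
    obtain ⟨t, ht⟩ := exists_smul_of_linForm_dvd (hπdvd _ h)
    exact hnpar c hcA hne t ht
  have hQ0 : ∀ U, π (Q U) ≠ 0 := by
    intro U
    rw [hQ, map_prod]
    refine Finset.prod_ne_zero_iff.mpr fun c hc => ?_
    obtain ⟨hne, hcA, -⟩ := hTmem U c hc
    rw [map_pow]
    exact pow_ne_zero _ (hπform c hcA hne)
  have hq0 : ∀ U, π (q U) ≠ 0 := by
    intro U
    rw [hq, map_prod]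
    exact Finset.prod_ne_zero_iff.mpr fun V _ => hQ0 V
  have hqdvd : ∀ U, ¬ linForm c₀ ∣ q U := by
    rintro U ⟨g, hg⟩
    exact hq0 U (by rw [hg, map_mul, hπ0, zero_mul])
  have hrel : (s : Set (Submodule K (Fin ℓ → K))).Pairwise
      (Function.onFun IsRelPrime fun U => π (Q U)) := by
    intro U hU V hV hUV
    simp only [Function.onFun, hQ, map_prod, map_pow]
    refine IsRelPrime.prod_left fun c hc => IsRelPrime.prod_right fun c' hc' => ?_
    refine IsRelPrime.pow ?_
    obtain ⟨hne, hcA, -⟩ := hTmem U c hc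
    obtain ⟨hne', hcA', -⟩ := hTmem V c' hc'
    obtain ⟨t, ht⟩ := hπlin c
    obtain ⟨t', ht'⟩ := hπlin c'
    rw [ht, ht']
    refine linForm_isRelPrime (fun h => hnpar c hcA hne t (sub_eq_zero.mp h)) fun r hr => hUV ?_
    rw [← hspan U hU c hc, ← hspan V hV c' hc']
    refine (span_pair_eq_of_mem (Submodule.mem_span_pair.mpr ⟨t' - r * t, r, ?_⟩)
      (hnpar c' hcA' hne')).symm
    rw [sub_eq_iff_eq_add] at hr
    rw [hr]
    module
  -- the global derivations obtained from the local ones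
  have hglob : ∀ U ∈ s, ∀ c ∈ A.hyps, c ≠ c₀ → linForm c ^ m c ∣ q U * ψ U (linForm c) := by
    intro U hU c hcA hne
    have hcT : c ∈ (locHyps A (Submodule.span K {c₀, c})).erase c₀ := by
      simp only [locHyps, Finset.mem_erase, Finset.mem_filter]
      exact ⟨hne, hcA, Submodule.subset_span (by simp)⟩
    by_cases hcU : Submodule.span K {c₀, c} = U
    · rw [hcU] at hcT
      exact (hψ U hU c hcT).mul_left _
    · have hmem : Submodule.span K {c₀, c} ∈ s.erase U := Finset.mem_erase.mpr
        ⟨hcU, Finset.mem_image.mpr ⟨c, Finset.mem_erase.mpr ⟨hne, hcA⟩, rfl⟩⟩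
      exact ((Finset.dvd_prod_of_mem (fun c => linForm c ^ m c) hcT).trans
        (Finset.dvd_prod_of_mem Q hmem)).mul_right _
  have hlog : ∀ U ∈ s, IsLogDer A m ((linForm c₀ * q U) • ψ U) := by
    intro U hU c hcA
    rw [Derivation.smul_apply, smul_eq_mul, mul_assoc]
    by_cases hne : c = c₀
    · rw [hne, hψ₀ U hU, hb]
      exact ⟨q U, by ring⟩
    · exact (hglob U hU c hcA hne).mul_left _
  have hlog' : ∀ U ∈ s, ∀ V ∈ s, IsLogDer A m ((q U * q V) • (ψ U - ψ V)) := by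
    intro U hU V hV c hcA
    rw [Derivation.smul_apply, smul_eq_mul, Derivation.sub_apply]
    by_cases hne : c = c₀
    · rw [hne, hψ₀ U hU, hψ₀ V hV]
      simp
    · rw [mul_sub]
      refine dvd_sub ?_ ?_
      · rw [mul_comm (q U), mul_assoc]
        exact (hglob U hU c hcA hne).mul_left _
      · rw [mul_assoc]
        exact (hglob V hV c hcA hne).mul_left _
  have hcoef : ∀ U ∈ s, ∃ a : Fin ℓ → S K ℓ, (linForm c₀ * q U) • ψ U = ∑ i, a i • θ i :=
    fun U hU => (hbasis _ (hlog U hU)).exists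
  choose! a ha using hcoef
  have hprop : ∀ U ∈ s, ∀ V ∈ s, ∀ i, π (q V) * π (a U i) = π (q U) * π (a V i) := by
    intro U hU V hV i
    obtain ⟨w, hw⟩ := (hbasis _ (hlog' U hU V hV)).exists
    have hlog'' : IsLogDer A m (linForm c₀ • (q U * q V) • (ψ U - ψ V)) := fun c hcA =>
      (hlog' U hU V hV c hcA).mul_left _
    have huniq := (hbasis _ hlog'').unique
      (y₁ := fun i => q V * a U i - q U * a V i) (y₂ := fun i => linForm c₀ * w i) ?_ ?_
    · have h := congrArg π (congrFun huniq i)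
      simp only [map_sub, map_mul, hπ0, zero_mul] at h
      exact sub_eq_zero.mp h
    · refine der_ext fun c => ?_
      have hUc := DFunLike.congr_fun (ha U hU) (linForm c)
      have hVc := DFunLike.congr_fun (ha V hV) (linForm c)
      rw [der_sum_smul_apply, Derivation.smul_apply, smul_eq_mul] at hUc hVc
      rw [der_sum_smul_apply]
      simp only [Derivation.smul_apply, smul_eq_mul, Derivation.sub_apply, sub_mul, mul_assoc,
        Finset.sum_sub_distrib, ← Finset.mul_sum]
      rw [← hUc, ← hVc]
      ring
    · simp only [mul_smul, ← Finset.smul_sum]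
      rw [← hw, mul_smul]
  have hfactor : ∀ i, ∃ v, ∀ U ∈ s, π (a U i) = π (q U) * v := by
    intro i
    have := exists_common_factor (s := s) (hex.image _) hrel (fun U _ => hQ0 U)
      (a := fun U => π (a U i)) fun U hU V hV => by
        simpa only [hq, map_prod] using hprop U hU V hV i
    simpa only [hq, map_prod] using this
  choose v hv using hfactor
  have hlogΘ : IsLogDer A m (∑ i, v i • θ i) := IsLogDer.sum_smul _ (fun i _ => hθ i) v
  obtain ⟨U, hU⟩ : s.Nonempty := hex.image _
  have hz : ∀ i, linForm c₀ ∣ a U i - q U * v i := by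
    intro i
    refine hπdvd _ ?_
    have := congrArg π (hv i U hU)
    rw [map_mul, hππ, hππ] at this
    rw [map_sub, map_mul, this, sub_self]
  choose z hz using hz
  have hlogZ : IsLogDer A m (∑ i, z i • θ i) := IsLogDer.sum_smul _ (fun i _ => hθ i) z
  set Θ := ∑ i, v i • θ i with hΘ
  set Z := ∑ i, z i • θ i with hZ
  have hdecomp : (linForm c₀ * q U) • ψ U = q U • Θ + linForm c₀ • Z := by
    rw [ha U hU, hΘ, hZ, Finset.smul_sum, Finset.smul_sum, ← Finset.sum_add_distrib]
    refine Finset.sum_congr rfl fun i _ => ?_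
    rw [smul_smul, smul_smul, ← add_smul, ← hz i, add_sub_cancel]
  have hdecomp' : ∀ c, linForm c₀ * q U * ψ U (linForm c) =
      q U * Θ (linForm c) + linForm c₀ * Z (linForm c) := fun c => by
    simpa using DFunLike.congr_fun hdecomp (linForm c)
  have hΘdvd : ∀ c, linForm c₀ ∣ Θ (linForm c) := by
    intro c
    refine (hy.dvd_or_dvd (a := q U) ?_).resolve_left (hqdvd U)
    exact ⟨q U * ψ U (linForm c) - Z (linForm c), by linear_combination -hdecomp' c⟩
  obtain ⟨η, hη⟩ := exists_smul_eq_of_forall_dvd hΘdvd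
  have hη' : ∀ c, Θ (linForm c) = linForm c₀ * η (linForm c) := fun c => by
    rw [hη, Derivation.smul_apply, smul_eq_mul]
  obtain ⟨h, hh⟩ := hlogΘ c₀ h₀.1
  obtain ⟨k, hk⟩ := hlogZ c₀ h₀.1
  have hη₀ : η (linForm c₀) = linForm c₀ ^ b * h := by
    refine mul_left_cancel₀ hy.ne_zero ?_
    rw [← hη', hh, hb]
    ring
  have hunit : linForm c₀ ∣ 1 - h := by
    refine (hy.dvd_or_dvd (a := q U) ⟨k, ?_⟩).resolve_left (hqdvd U)
    refine mul_left_cancel₀ (pow_ne_zero (b + 1) hy.ne_zero) ?_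
    have h1 := hdecomp' c₀
    rw [hψ₀ U hU, hh, hk, hb] at h1
    linear_combination h1
  obtain ⟨e, he⟩ := hunit
  refine ⟨derOf (homogeneousComponent (m c₀ - 1) ∘ₗ valuesOf η), fun c => ?_, ?_, fun c hcA hne => ?_⟩
  · rw [derOf_linForm]
    exact homogeneousComponent_isHomogeneous _ _
  · rw [derOf_linForm, LinearMap.comp_apply, valuesOf_apply, hη₀, hb, Nat.add_sub_cancel]
    have h1 : linForm c₀ ^ b * h = linForm c₀ ^ b - linForm c₀ ^ (b + 1) * e := by
      linear_combination -linForm c₀ ^ b * he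
    have h2 : homogeneousComponent b (linForm c₀ ^ (b + 1) * e) = 0 :=
      eq_zero_of_linForm_pow_dvd hc₀ (linForm_pow_dvd_homogeneousComponent (Dvd.intro _ rfl) b)
        (homogeneousComponent_isHomogeneous _ _) (Nat.lt_succ_self b)
    rw [h1, map_sub, h2, sub_zero]
    exact homogeneousComponent_eq_self (linForm_pow_isHomogeneous c₀ b)
  · rw [derOf_linForm, LinearMap.comp_apply, valuesOf_apply]
    refine linForm_pow_dvd_homogeneousComponent ?_ _
    refine IsRelPrime.dvd_of_dvd_mul_left (y := linForm c₀) ?_ ?_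
    · exact ((linForm_isRelPrime hc₀ (hnpar c hcA hne)).symm).pow_left
    · rw [← hη']
      exact hlogΘ c hcA

lemma notMem_span_pair_of_isLocallyHeavy {A : Arrangement K ℓ} {m : (Fin ℓ → K) → ℕ}
    (hm : ∀ c ∈ A.hyps, 0 < m c) {cH cL c : Fin ℓ → K} (hne : cH ≠ cL)
    (hH : IsLocallyHeavy A m cH) (hL : IsLocallyHeavy A m cL) (hc : c ∈ A.hyps)
    (hcH : c ≠ cH) (hcL : c ≠ cL) : c ∉ Submodule.span K {cH, cL} := by
  intro hmem
  set U := Submodule.span K {cH, cL} with hU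
  have hUH : cH ∈ U := Submodule.subset_span (by simp)
  have hUL : cL ∈ U := Submodule.subset_span (by simp)
  have hflat : IsFlatOfRank A U 2 := isFlatOfRank_span_pair A hH.1 hL.1 hne
  have hsub : ({cH, cL, c} : Finset (Fin ℓ → K)) ⊆ locHyps A U := by
    intro x hx
    simp only [Finset.mem_insert, Finset.mem_singleton] at hx
    rcases hx with rfl | rfl | rfl
    · exact Finset.mem_filter.mpr ⟨hH.1, hUH⟩
    · exact Finset.mem_filter.mpr ⟨hL.1, hUL⟩
    · exact Finset.mem_filter.mpr ⟨hc, hmem⟩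
  have hcard : 3 ≤ (locHyps A U).card := by
    refine le_trans (le_of_eq ?_) (Finset.card_le_card hsub)
    rw [Finset.card_eq_three.mpr ⟨cH, cL, c, hne, hcH.symm, hcL.symm, rfl⟩]
  have h1 : m cL + m c ≤ m cH := by
    refine le_trans ?_ (hH.2 U hflat hUH hcard)
    rw [← Finset.sum_pair (f := m) hcL.symm]
    refine Finset.sum_le_sum_of_subset fun x hx => ?_
    simp only [Finset.mem_insert, Finset.mem_singleton] at hx
    refine Finset.mem_erase.mpr ⟨?_, hsub (by simp; tauto)⟩
    rcases hx with rfl | rfl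
    · exact hne.symm
    · exact hcH
  have h2 : m cH + m c ≤ m cL := by
    refine le_trans ?_ (hL.2 U hflat hUL hcard)
    rw [← Finset.sum_pair (f := m) hcH.symm]
    refine Finset.sum_le_sum_of_subset fun x hx => ?_
    simp only [Finset.mem_insert, Finset.mem_singleton] at hx
    refine Finset.mem_erase.mpr ⟨?_, hsub (by simp; tauto)⟩
    rcases hx with rfl | rfl
    · exact hne
    · exact hcL
  have := hm c hc
  omega

lemma reducible_of_functional {A : Arrangement K ℓ} (f : (Fin ℓ → K) →ₗ[K] K)
    {c c' : Fin ℓ → K} (hc : f c = 1) (hc' : f c' = 0) (h0 : c' ≠ 0)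
    (h : ∀ a ∈ A.hyps, f a = 0 ∨ a = c) : Reducible A := by
  refine ⟨LinearMap.ker f, Submodule.span K {c}, ?_, ?_, ?_, ?_, fun a ha => ?_⟩
  · exact fun hbot => h0 ((Submodule.eq_bot_iff _).mp hbot c' hc')
  · rw [Ne, Submodule.span_singleton_eq_bot]
    rintro rfl
    simp at hc
  · refine (Submodule.eq_bot_iff _).mpr fun x hx => ?_
    obtain ⟨hx, hx'⟩ := Submodule.mem_inf.mp hx
    obtain ⟨t, rfl⟩ := Submodule.mem_span_singleton.mp hx'
    rw [LinearMap.mem_ker, map_smul, hc, smul_eq_mul, mul_one] at hx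
    rw [hx, zero_smul]
  · refine eq_top_iff.mpr fun x _ => Submodule.mem_sup.mpr
      ⟨x - f x • c, ?_, f x • c, ?_, sub_add_cancel _ _⟩
    · rw [LinearMap.mem_ker, map_sub, map_smul, hc, smul_eq_mul, mul_one, sub_self]
    · exact Submodule.smul_mem _ _ (Submodule.mem_span_singleton_self c)
  · rcases h a ha with h | rfl
    · exact Or.inl h
    · exact Or.inr (Submodule.mem_span_singleton_self a)

/-- A power of `linForm c` lies in the ideal of two linear forms only if `c` lies in their span. -/
lemma mem_span_of_linForm_pow_eq {c c₁ c₂ : Fin ℓ → K} {t : K} (ht : t ≠ 0) {n : ℕ}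
    {g₁ g₂ : S K ℓ} (h : C t * linForm c ^ n = linForm c₁ * g₁ + linForm c₂ * g₂) :
    c ∈ Submodule.span K {c₁, c₂} := by
  by_contra hmem
  obtain ⟨f, hf, hf0⟩ := exists_functional hmem
  have heval : ∀ a, aeval (fun i => f (Pi.single i 1)) (linForm a) = f a := by
    intro a
    rw [aeval_linForm]
    conv_rhs => rw [pi_eq_sum_univ' a, map_sum]
    exact Finset.sum_congr rfl fun i _ => by rw [map_smul]; rfl
  have h1 := congrArg (aeval fun i => f (Pi.single i 1)) h
  rw [map_mul, map_add, map_mul, map_mul, map_pow, heval, heval, heval, hf,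
    hf0 c₁ (Submodule.subset_span (by simp)), hf0 c₂ (Submodule.subset_span (by simp))] at h1
  simp [ht] at h1

lemma reducible_of_isFree_of_le {A : Arrangement K 3} {m : (Fin 3 → K) → ℕ}
    (hm : ∀ c ∈ A.hyps, 0 < m c) {cH cL : Fin 3 → K} (hne : cH ≠ cL)
    (hH : IsLocallyHeavy A m cH) (hL : IsLocallyHeavy A m cL) (hle : m cL ≤ m cH)
    (hfree : IsFree A m) : Reducible A := by
  obtain ⟨η, hηhom, hηL, hη⟩ := exists_der_of_isFree hL (hm cL hL.1)
    ⟨cH, Finset.mem_erase.mpr ⟨hne, hH.1⟩⟩ hfree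
  have hηH : η (linForm cH) = 0 := by
    refine eq_zero_of_linForm_pow_dvd (A.ne_zero cH hH.1) (hη cH hH.1 hne) (hηhom cH) ?_
    have := hm cL hL.1
    omega
  have hspan := fun c hc hcH hcL =>
    notMem_span_pair_of_isLocallyHeavy (c := c) hm hne hH hL hc hcH hcL
  obtain ⟨c₀, hc₀, hc₀A⟩ : ∃ c₀, c₀ ∉ Submodule.span K {cH, cL} ∧
      (∀ c ∈ A.hyps, c ≠ cH → c ≠ cL → c₀ ∈ A.hyps) := by
    by_cases hex : ∃ c ∈ A.hyps, c ≠ cH ∧ c ≠ cL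
    · obtain ⟨c, hc, hcH, hcL⟩ := hex
      exact ⟨c, hspan c hc hcH hcL, fun _ _ _ _ => hc⟩
    · have hlt : Submodule.span K {cH, cL} < ⊤ := by
        refine Submodule.lt_top_of_finrank_lt_finrank ?_
        rw [(isFlatOfRank_span_pair A hH.1 hL.1 hne).1]
        simp
      obtain ⟨c, -, hc⟩ := SetLike.exists_of_lt hlt
      exact ⟨c, hc, fun a ha haH haL => absurd ⟨a, ha, haH, haL⟩ hex⟩
  have hli : LinearIndependent K ![c₀, cH, cL] := by
    refine linearIndependent_finCons.mpr ⟨linearIndependent_pair A hH.1 hL.1 hne, ?_⟩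
    rwa [Matrix.range_cons, Matrix.range_cons, Matrix.range_empty, Set.union_empty,
      Set.singleton_union]
  let b : Module.Basis (Fin 3) K (Fin 3 → K) := basisOfLinearIndependentOfCardEqFinrank hli (by simp)
  have hb : ⇑b = ![c₀, cH, cL] := coe_basisOfLinearIndependentOfCardEqFinrank hli _
  have hb0 : b 0 = c₀ := by rw [hb]; rfl
  have hb1 : b 1 = cH := by rw [hb]; rfl
  have hb2 : b 2 = cL := by rw [hb]; rfl
  have hexp : ∀ c, c = b.coord 0 c • c₀ + b.coord 1 c • cH + b.coord 2 c • cL := fun c => by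
    conv_lhs => rw [← b.sum_repr c, Fin.sum_univ_three, hb0, hb1, hb2]
    rfl
  have hcoord : ∀ i j, b.coord i (b j) = if j = i then 1 else 0 := fun i j => by
    rw [b.coord_apply, b.repr_self_apply]
  have hz : ∀ c ∈ A.hyps, c ≠ cH → c ≠ cL → b.coord 0 c ≠ 0 := by
    intro c hc hcH hcL h0
    refine hspan c hc hcH hcL (Submodule.mem_span_pair.mpr ⟨b.coord 1 c, b.coord 2 c, ?_⟩)
    conv_rhs => rw [hexp c, h0, zero_smul, zero_add]
  have hpair : ∀ c ∈ A.hyps, c ≠ cH → c ≠ cL → ∀ c' ∈ A.hyps, c' ≠ cH → c' ≠ cL →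
      b.coord 0 c' * b.coord 2 c = b.coord 0 c * b.coord 2 c' ∨
      b.coord 0 c' * b.coord 1 c = b.coord 0 c * b.coord 1 c' := by
    intro c hc hcH hcL c' hc' hcH' hcL'
    by_contra! hcon
    have hdiff : b.coord 0 c' • c - b.coord 0 c • c' =
        (b.coord 0 c' * b.coord 1 c - b.coord 0 c * b.coord 1 c') • cH +
        (b.coord 0 c' * b.coord 2 c - b.coord 0 c * b.coord 2 c') • cL := by
      conv_lhs => arg 1; rw [hexp c]
      conv_lhs => arg 2; arg 2; rw [hexp c']
      module
    obtain ⟨g, hg⟩ := (dvd_pow_self (linForm c) (hm c hc).ne').trans (hη c hc hcL)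
    obtain ⟨g', hg'⟩ := (dvd_pow_self (linForm c') (hm c' hc').ne').trans (hη c' hc' hcL')
    have hval := congrArg (valuesOf η) hdiff
    simp only [map_add, map_sub, map_smul, valuesOf_apply, hηH, hηL, hg, hg', smul_zero,
      zero_add, smul_eq_C_mul] at hval
    have hmem : cL ∈ Submodule.span K {c, c'} := by
      refine mem_span_of_linForm_pow_eq (n := m cL - 1) (sub_ne_zero.mpr hcon.1)
        (g₁ := C (b.coord 0 c') * g) (g₂ := -C (b.coord 0 c) * g') ?_
      rw [map_sub, ← hval]
      ring
    obtain ⟨s, t, hst⟩ := Submodule.mem_span_pair.mp hmem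
    have h0 := congrArg (b.coord 0) hst
    have h1 := congrArg (b.coord 1) hst
    have h2 := congrArg (b.coord 2) hst
    rw [← hb2] at h0 h1 h2
    simp only [map_add, map_smul, smul_eq_mul, hcoord] at h0 h1 h2
    simp only [Fin.isValue, Fin.reduceEq, if_false, if_true] at h0 h1 h2
    have hs : s = 0 := by
      refine (mul_eq_zero.mp ?_).resolve_right (sub_ne_zero.mpr hcon.2)
      linear_combination b.coord 0 c' * h1 - b.coord 1 c' * h0
    have ht : t = 0 := by
      refine (mul_eq_zero.mp ?_).resolve_right (hz c' hc' hcH' hcL')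
      simpa [hs] using h0
    simp [hs, ht] at h2
  have hdich : (∀ c ∈ A.hyps, c ≠ cH → c ≠ cL → b.coord 2 c = 0) ∨
      (∀ c ∈ A.hyps, c ≠ cH → c ≠ cL → b.coord 1 c = 0) := by
    by_contra! hcon
    obtain ⟨⟨c, hc, hcH, hcL, hc2⟩, c', hc', hcH', hcL', hc1⟩ := hcon
    have hzero : ∀ c ∈ A.hyps, c ≠ cH → c ≠ cL → b.coord 2 c = 0 ∨ b.coord 1 c = 0 := by
      intro c hc hcH hcL
      have hcH₀ : c₀ ≠ cH := fun h => hc₀ (h ▸ Submodule.subset_span (by simp))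
      have hcL₀ : c₀ ≠ cL := fun h => hc₀ (h ▸ Submodule.subset_span (by simp))
      have := hpair c hc hcH hcL c₀ (hc₀A c hc hcH hcL) hcH₀ hcL₀
      rw [← hb0] at this
      simpa [hcoord] using this
    have h1 := (hzero c hc hcH hcL).resolve_left hc2
    have h2 := (hzero c' hc' hcH' hcL').resolve_right hc1
    rcases hpair c hc hcH hcL c' hc' hcH' hcL' with h | h
    · rw [h2, mul_zero] at h
      exact (mul_ne_zero (hz c' hc' hcH' hcL') hc2) h
    · rw [h1, mul_zero] at h
      exact (mul_ne_zero (hz c hc hcH hcL) hc1) h.symm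
  rcases hdich with h | h
  · refine reducible_of_functional (b.coord 2) (c := cL) (c' := cH) ?_ ?_ (A.ne_zero cH hH.1) ?_
    · rw [← hb2, hcoord]; rfl
    · rw [← hb1, hcoord]; rfl
    · intro a ha
      by_cases haL : a = cL
      · exact Or.inr haL
      by_cases haH : a = cH
      · rw [haH, ← hb1, hcoord]; exact Or.inl rfl
      · exact Or.inl (h a ha haH haL)
  · refine reducible_of_functional (b.coord 1) (c := cH) (c' := cL) ?_ ?_ (A.ne_zero cL hL.1) ?_
    · rw [← hb1, hcoord]; rfl
    · rw [← hb2, hcoord]; rfl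
    · intro a ha
      by_cases haH : a = cH
      · exact Or.inr haH
      by_cases haL : a = cL
      · rw [haL, ← hb2, hcoord]; exact Or.inl rfl
      · exact Or.inl (h a ha haH haL)

lemma reducible_of_isFree {A : Arrangement K 3} {m : (Fin 3 → K) → ℕ}
    (hm : ∀ c ∈ A.hyps, 0 < m c) {cH cL : Fin 3 → K} (hne : cH ≠ cL)
    (hH : IsLocallyHeavy A m cH) (hL : IsLocallyHeavy A m cL) (hfree : IsFree A m) :
    Reducible A := by
  rcases le_total (m cL) (m cH) with hle | hle
  · exact reducible_of_isFree_of_le hm hne hH hL hle hfree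
  · exact reducible_of_isFree_of_le hm hne.symm hL hH hle hfree

lemma homogeneousComponent_mul_of_isHomogeneous {σ R : Type*} [CommRing R]
    {p : MvPolynomial σ R} {n : ℕ} (hp : p.IsHomogeneous n) (g : MvPolynomial σ R) (j : ℕ) :
    homogeneousComponent (n + j) (p * g) = p * homogeneousComponent j g := by
  let : GradedAlgebra (homogeneousSubmodule σ R) := gradedAlgebra
  rw [← decomposition.decompose'_apply, ← decomposition.decompose'_apply]
  exact DirectSum.coe_decompose_mul_add_of_left_mem (homogeneousSubmodule σ R) hp

lemma exists_homogeneous_factor {c : Fin ℓ → K} {n d : ℕ} {f : S K ℓ}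
    (h : linForm c ^ n ∣ f) (hf : f.IsHomogeneous d) (hnd : n ≤ d) :
    ∃ g : S K ℓ, g.IsHomogeneous (d - n) ∧ f = linForm c ^ n * g := by
  obtain ⟨g, hg⟩ := h
  refine ⟨homogeneousComponent (d - n) g, homogeneousComponent_isHomogeneous _ _, ?_⟩
  rw [← homogeneousComponent_mul_of_isHomogeneous (linForm_pow_isHomogeneous c n), ← hg,
    Nat.add_sub_cancel' hnd, homogeneousComponent_eq_self hf]

lemma aeval_C_mul_of_isHomogeneous {σ R : Type*} [CommRing R] [Fintype σ]
    {f : MvPolynomial σ R} {n : ℕ} (hf : f.IsHomogeneous n) (v : σ → R) (y : MvPolynomial σ R) :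
    aeval (fun i => C (v i) * y) f = C (eval v f) * y ^ n := by
  rw [aeval_def, eval₂_eq', eval_eq', map_sum, Finset.sum_mul]
  refine Finset.sum_congr rfl fun d hd => ?_
  have hdeg : ∑ i, d i = n := by
    rw [← Finsupp.degree_eq_sum]
    by_contra hne
    exact (mem_support_iff.mp hd) (hf.coeff_eq_zero hne)
  simp only [mul_pow, Finset.prod_mul_distrib, Finset.prod_pow_eq_pow_sum, hdeg, map_mul,
    map_prod, map_pow, algebraMap_eq]
  ring

/-- In two variables, modulo a linear form every form is a multiple of a power of one fixed
linear form. -/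
lemma exists_linForm_pow_congr {c : Fin 2 → K} (hc : c ≠ 0) :
    ∃ e : Fin 2 → K, ∀ (d : ℕ) (f : S K 2), f.IsHomogeneous d →
      ∃ γ : K, linForm c ∣ f - C γ * linForm e ^ d := by
  obtain ⟨e, he⟩ : ∃ e : Fin 2 → K, c 0 * e 1 - c 1 * e 0 = 1 := by
    by_cases h0 : c 0 = 0
    · have h1 : c 1 ≠ 0 := fun h1 => hc (funext fun i => by fin_cases i <;> assumption)
      exact ⟨![-(c 1)⁻¹, 0], by simp [h1]⟩
    · exact ⟨![0, (c 0)⁻¹], by simp [h0]⟩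
  set v : Fin 2 → K := ![-c 1, c 0] with hv
  set σ : S K 2 →ₐ[K] S K 2 := aeval fun i => C (v i) * linForm e with hσ
  have hX : ∀ i, linForm c ∣ X i - σ (X i) := by
    intro i
    have hi : X i - σ (X i) = linForm (Pi.single i 1 - v i • e) := by
      rw [hσ, aeval_X, linForm_sub, linForm_single, linForm_smul]
    rw [hi]
    have hmul : Pi.single i 1 - v i • e = (![e 1, -e 0] i) • c := by
      funext j
      fin_cases i <;> fin_cases j <;> simp [hv]
      · linear_combination -he
      · ring
      · ring
      · linear_combination -he
    rw [hmul, linForm_smul]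
    exact Dvd.intro_left _ rfl
  have hσdvd : ∀ f, linForm c ∣ f - σ f := by
    intro f
    induction f using MvPolynomial.induction_on with
    | C a => simp [hσ]
    | add p q hp hq =>
      rw [map_add, add_sub_add_comm]
      exact dvd_add hp hq
    | mul_X p i hp =>
      rw [map_mul]
      have : p * X i - σ p * σ (X i) = (p - σ p) * X i + σ p * (X i - σ (X i)) := by ring
      rw [this]
      exact dvd_add (hp.mul_right _) ((hX i).mul_left _)
  refine ⟨e, fun d f hf => ⟨eval v f, ?_⟩⟩
  rw [← aeval_C_mul_of_isHomogeneous hf]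
  exact hσdvd f

lemma dvd_or_exists_dvd_sub {c : Fin 2 → K} (hc : c ≠ 0) {n d₀ d₁ : ℕ} (hd : d₀ ≤ d₁)
    {f₀ f₁ : S K 2} (hf₀ : f₀.IsHomogeneous d₀) (hf₁ : f₁.IsHomogeneous d₁)
    (h₀ : linForm c ^ n ∣ f₀) (h₁ : linForm c ^ n ∣ f₁) :
    linForm c ^ (n + 1) ∣ f₀ ∨
      ∃ a : S K 2, a.IsHomogeneous (d₁ - d₀) ∧ linForm c ^ (n + 1) ∣ f₁ - a * f₀ := by
  by_cases hn : d₀ < n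
  · left
    rw [eq_zero_of_linForm_pow_dvd hc h₀ hf₀ hn]
    exact dvd_zero _
  obtain ⟨e, he⟩ := exists_linForm_pow_congr hc
  obtain ⟨g₀, hg₀, rfl⟩ := exists_homogeneous_factor h₀ hf₀ (by omega)
  obtain ⟨g₁, hg₁, rfl⟩ := exists_homogeneous_factor h₁ hf₁ (by omega)
  obtain ⟨γ₀, h₀, hγ₀⟩ := he _ _ hg₀
  obtain ⟨γ₁, h₁, hγ₁⟩ := he _ _ hg₁
  by_cases hγ : γ₀ = 0
  · left
    rw [pow_succ]
    refine mul_dvd_mul_left _ ⟨h₀, ?_⟩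
    rw [← hγ₀, hγ]
    simp
  · right
    refine ⟨C (γ₁ / γ₀) * linForm e ^ (d₁ - d₀), ?_, ?_⟩
    · exact (linForm_pow_isHomogeneous e _).C_mul _
    · have hpow : linForm e ^ (d₁ - n) = linForm e ^ (d₁ - d₀) * linForm e ^ (d₀ - n) := by
        rw [← pow_add]
        congr 1
        omega
      have hC : (C γ₁ : S K 2) = C (γ₁ / γ₀) * C γ₀ := by
        rw [← C_mul, div_mul_cancel₀ _ hγ]
      refine ⟨h₁ - C (γ₁ / γ₀) * linForm e ^ (d₁ - d₀) * h₀, ?_⟩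
      rw [hpow] at hγ₁
      linear_combination linForm c ^ n * hγ₁ -
        linForm c ^ n * C (γ₁ / γ₀) * linForm e ^ (d₁ - d₀) * hγ₀ -
        linForm c ^ n * linForm e ^ (d₁ - d₀) * linForm e ^ (d₀ - n) * (-hC)

/-- A homogeneous Saito basis of a multiarrangement in the plane, in terms of the values of the
derivations on covectors. -/
def IsPlaneSaitoPair (T : Finset (Fin 2 → K)) (m : (Fin 2 → K) → ℕ)
    (φ₀ φ₁ : (Fin 2 → K) →ₗ[K] S K 2) (d₀ d₁ : ℕ) : Prop :=
  (∀ c, (φ₀ c).IsHomogeneous d₀) ∧ (∀ c, (φ₁ c).IsHomogeneous d₁) ∧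
  (∀ c ∈ T, linForm c ^ m c ∣ φ₀ c ∧ linForm c ^ m c ∣ φ₁ c) ∧
  ∃ k : K, k ≠ 0 ∧ φ₀ (Pi.single 0 1) * φ₁ (Pi.single 1 1) -
    φ₀ (Pi.single 1 1) * φ₁ (Pi.single 0 1) = C k * ∏ c ∈ T, linForm c ^ m c

lemma IsPlaneSaitoPair.symm {T : Finset (Fin 2 → K)} {m : (Fin 2 → K) → ℕ}
    {φ₀ φ₁ : (Fin 2 → K) →ₗ[K] S K 2} {d₀ d₁ : ℕ} (h : IsPlaneSaitoPair T m φ₀ φ₁ d₀ d₁) :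
    IsPlaneSaitoPair T m φ₁ φ₀ d₁ d₀ := by
  obtain ⟨h0, h1, h2, k, hk, hdet⟩ := h
  refine ⟨h1, h0, fun c hc => (h2 c hc).symm, -k, neg_ne_zero.mpr hk, ?_⟩
  rw [map_neg]
  linear_combination -hdet

lemma IsPlaneSaitoPair.exists_succ {T : Finset (Fin 2 → K)} {m : (Fin 2 → K) → ℕ}
    {φ₀ φ₁ : (Fin 2 → K) →ₗ[K] S K 2} {d₀ d₁ : ℕ} (h : IsPlaneSaitoPair T m φ₀ φ₁ d₀ d₁)
    (hd : d₀ ≤ d₁) {c : Fin 2 → K} (hc : c ∈ T) (hc0 : c ≠ 0) :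
    ∃ ψ₀ ψ₁ e₀ e₁, IsPlaneSaitoPair T (Function.update m c (m c + 1)) ψ₀ ψ₁ e₀ e₁ := by
  obtain ⟨h0, h1, h2, k, hk, hdet⟩ := h
  have hprod : ∏ a ∈ T, linForm a ^ Function.update m c (m c + 1) a =
      linForm c * ∏ a ∈ T, linForm a ^ m a := by
    rw [← Finset.mul_prod_erase T _ hc, ← Finset.mul_prod_erase T (fun a => linForm a ^ m a) hc,
      Function.update_self, Finset.prod_congr rfl fun a ha => by
        rw [Function.update_of_ne (Finset.ne_of_mem_erase ha)]]
    ring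
  have hupd : ∀ f : (Fin 2 → K) → S K 2, linForm c ^ (m c + 1) ∣ f c →
      (∀ a ∈ T, linForm a ^ m a ∣ f a) →
      ∀ a ∈ T, linForm a ^ Function.update m c (m c + 1) a ∣ f a := by
    intro f hfc hf a ha
    by_cases hac : a = c
    · rw [hac, Function.update_self]
      exact hfc
    · rw [Function.update_of_ne hac]
      exact hf a ha
  have hmul : ∀ φ : (Fin 2 → K) →ₗ[K] S K 2, ∀ d, (∀ a, (φ a).IsHomogeneous d) →
      ∀ a, ((LinearMap.mulLeft K (linForm c) ∘ₗ φ) a).IsHomogeneous (1 + d) :=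
    fun φ d hφ a => (linForm_isHomogeneous c).mul (hφ a)
  have hmul' : ∀ φ : (Fin 2 → K) →ₗ[K] S K 2, (∀ a ∈ T, linForm a ^ m a ∣ φ a) →
      ∀ a ∈ T, linForm a ^ Function.update m c (m c + 1) a ∣
        (LinearMap.mulLeft K (linForm c) ∘ₗ φ) a := by
    intro φ hφ
    refine hupd _ ?_ fun a ha => (hφ a ha).mul_left _
    rw [pow_succ']
    exact mul_dvd_mul_left _ (hφ c hc)
  rcases dvd_or_exists_dvd_sub hc0 hd (h0 c) (h1 c) (h2 c hc).1 (h2 c hc).2 with h | ⟨a, ha, h⟩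
  · refine ⟨φ₀, LinearMap.mulLeft K (linForm c) ∘ₗ φ₁, d₀, 1 + d₁, h0, hmul _ _ h1,
      fun a ha => ⟨hupd _ h (fun b hb => (h2 b hb).1) a ha,
        hmul' _ (fun b hb => (h2 b hb).2) a ha⟩, k, hk, ?_⟩
    rw [hprod]
    simp only [LinearMap.comp_apply, LinearMap.mulLeft_apply]
    linear_combination linForm c * hdet
  · refine ⟨LinearMap.mulLeft K (linForm c) ∘ₗ φ₀, φ₁ - LinearMap.mulLeft K a ∘ₗ φ₀, 1 + d₀, d₁,
      hmul _ _ h0, fun b => ?_, fun b hb => ⟨hmul' _ (fun b hb => (h2 b hb).1) b hb,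
        hupd (φ₁ - LinearMap.mulLeft K a ∘ₗ φ₀) h (fun b hb => ?_) b hb⟩, k, hk, ?_⟩
    · refine (h1 b).sub ?_
      have := ha.mul (h0 b)
      rwa [Nat.sub_add_cancel hd] at this
    · exact dvd_sub (h2 b hb).2 ((h2 b hb).1.mul_left _)
    · rw [hprod]
      simp only [LinearMap.comp_apply, LinearMap.mulLeft_apply, LinearMap.sub_apply]
      linear_combination linForm c * hdet

/-- Every multiarrangement in the plane has a homogeneous Saito basis. -/
lemma exists_isPlaneSaitoPair (T : Finset (Fin 2 → K)) (hT : ∀ c ∈ T, c ≠ 0)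
    (m : (Fin 2 → K) → ℕ) : ∃ φ₀ φ₁ d₀ d₁, IsPlaneSaitoPair T m φ₀ φ₁ d₀ d₁ := by
  induction hn : ∑ c ∈ T, m c generalizing m with
  | zero =>
    have hm : ∀ c ∈ T, m c = 0 := fun c hc => Finset.sum_eq_zero_iff.mp hn c hc
    refine ⟨Algebra.linearMap K (S K 2) ∘ₗ LinearMap.proj 0,
      Algebra.linearMap K (S K 2) ∘ₗ LinearMap.proj 1, 0, 0, fun c => isHomogeneous_C _ _,
      fun c => isHomogeneous_C _ _, fun c hc => by simp [hm c hc], 1, one_ne_zero, ?_⟩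
    rw [Finset.prod_eq_one fun c hc => by rw [hm c hc, pow_zero]]
    simp
  | succ n ih =>
    obtain ⟨c, hc, hmc⟩ : ∃ c ∈ T, m c ≠ 0 := by
      by_contra! hcon
      rw [Finset.sum_eq_zero hcon] at hn
      omega
    set m' := Function.update m c (m c - 1) with hm'
    have hmm : m = Function.update m' c (m' c + 1) := by
      rw [hm', Function.update_self, Function.update_idem, Nat.sub_add_cancel (by omega),
        Function.update_eq_self]
    have hsum : ∑ c ∈ T, m' c = n := by
      rw [← Finset.add_sum_erase T m hc] at hn
      rw [← Finset.add_sum_erase T m' hc, hm', Function.update_self,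
        Finset.sum_congr rfl fun a ha => Function.update_of_ne (Finset.ne_of_mem_erase ha) _ m]
      change m c - 1 + ∑ a ∈ T.erase c, m a = n
      omega
    obtain ⟨φ₀, φ₁, d₀, d₁, h⟩ := ih m' hsum
    rw [hmm]
    rcases le_total d₀ d₁ with hd | hd
    · exact h.exists_succ hd hc (hT c hc)
    · exact h.symm.exists_succ hd hc (hT c hc)

lemma prod_linForm_pow_dvd_det {A : Arrangement K ℓ} {m : (Fin ℓ → K) → ℕ} {θ : Fin ℓ → Der K ℓ}
    (hθ : ∀ i, IsLogDer A m (θ i)) (b : Module.Basis (Fin ℓ) K (Fin ℓ → K)) :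
    ∏ c ∈ A.hyps, linForm c ^ m c ∣ (Matrix.of fun i j => θ i (linForm (b j))).det := by
  set N : Matrix (Fin ℓ) (Fin ℓ) (S K ℓ) := Matrix.of fun i j => θ i (linForm (b j)) with hN
  refine Finset.prod_dvd_of_isRelPrime ?_ fun c hc => ?_
  · intro c hc c' hc' hne
    exact (linForm_isRelPrime (A.ne_zero c hc) (A.nonparallel c hc c' hc' hne)).pow
  · have hNc : N.mulVec (fun j => C (b.repr c j)) = fun i => θ i (linForm c) := by
      funext i
      rw [← valuesOf_apply (θ i) c]
      conv_rhs => rw [← b.sum_repr c, map_sum]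
      rw [Matrix.mulVec, dotProduct]
      refine Finset.sum_congr rfl fun j _ => ?_
      rw [map_smul, smul_eq_C_mul, valuesOf_apply, mul_comm]
      rfl
    obtain ⟨j, hj⟩ : ∃ j, b.repr c j ≠ 0 := by
      by_contra! hcon
      refine A.ne_zero c hc (b.repr.map_eq_zero_iff.mp (Finsupp.ext hcon))
    have hadj := congrFun (congrArg N.adjugate.mulVec hNc) j
    rw [Matrix.mulVec_mulVec, Matrix.adjugate_mul, Matrix.smul_mulVec, Matrix.one_mulVec,
      Pi.smul_apply, smul_eq_mul] at hadj
    have hunit : IsUnit (C (b.repr c j) : S K ℓ) := (isUnit_iff_ne_zero.mpr hj).map C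
    rw [← hunit.dvd_mul_right, hadj, Matrix.mulVec, dotProduct]
    exact Finset.dvd_sum fun i _ => (hθ i c hc).mul_left _

/-- Saito's criterion. -/
lemma isDerBasis_of_det {A : Arrangement K ℓ} {m : (Fin ℓ → K) → ℕ} {θ : Fin ℓ → Der K ℓ}
    (hθ : ∀ i, IsLogDer A m (θ i)) (b : Module.Basis (Fin ℓ) K (Fin ℓ → K)) {k : K} (hk : k ≠ 0)
    (hdet : (Matrix.of fun i j => θ i (linForm (b j))).det = C k * ∏ c ∈ A.hyps, linForm c ^ m c) :
    IsDerBasis A m θ := by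
  set M : Matrix (Fin ℓ) (Fin ℓ) (S K ℓ) := Matrix.of fun i j => θ i (linForm (b j)) with hM
  have hM0 : M.det ≠ 0 := by
    rw [hdet]
    exact mul_ne_zero (C_ne_zero.mpr hk)
      (Finset.prod_ne_zero_iff.mpr fun c hc => pow_ne_zero _ (linForm_ne_zero (A.ne_zero c hc)))
  refine ⟨hθ, fun η hη => ?_⟩
  have hdvd : ∀ i, M.det ∣ Matrix.cramer M.transpose (fun j => η (linForm (b j))) i := by
    intro i
    have hlog : ∀ l, IsLogDer A m (Function.update θ i η l) := by
      intro l
      by_cases hl : l = i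
      · rw [hl, Function.update_self]
        exact hη
      · rw [Function.update_of_ne hl]
        exact hθ l
    have hrow : (Matrix.of fun l j => Function.update θ i η l (linForm (b j))) =
        M.updateRow i fun j => η (linForm (b j)) := by
      ext1 l j
      by_cases hl : l = i
      · rw [hl, Matrix.updateRow_self, Matrix.of_apply, Function.update_self]
      · rw [Matrix.updateRow_ne hl, Matrix.of_apply, Function.update_of_ne hl]
        rfl
    have h := prod_linForm_pow_dvd_det hlog b
    rw [hrow] at h
    rw [Matrix.cramer_transpose_apply, hdet]
    exact (IsUnit.mul_left_dvd ((isUnit_iff_ne_zero.mpr hk).map C)).mpr h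
  choose f hf using hdvd
  refine ⟨f, ?_, fun f' hf' => ?_⟩
  · have hval : valuesOf η = valuesOf (∑ i, f i • θ i) := by
      refine b.ext fun j => ?_
      have hcr := congrFun (Matrix.mulVec_cramer M.transpose fun j => η (linForm (b j))) j
      rw [Matrix.det_transpose, Pi.smul_apply, smul_eq_mul] at hcr
      refine mul_left_cancel₀ hM0 ?_
      rw [valuesOf_apply, valuesOf_apply, ← hcr, der_sum_smul_apply, Finset.mul_sum,
        Matrix.mulVec, dotProduct]
      refine Finset.sum_congr rfl fun i _ => ?_
      rw [hf i, hM, Matrix.transpose_apply, Matrix.of_apply]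
      ring
    exact der_ext fun c => congrArg (fun φ : (Fin ℓ → K) →ₗ[K] S K ℓ => φ c) hval
  · have hη' : ∀ j, ∑ i, f' i * θ i (linForm (b j)) = η (linForm (b j)) := fun j => by
      rw [hf', der_sum_smul_apply]
    refine sub_eq_zero.mp (Matrix.eq_zero_of_vecMul_eq_zero hM0 ?_)
    funext j
    have hcr := congrFun (Matrix.mulVec_cramer M.transpose fun j => η (linForm (b j))) j
    rw [Matrix.det_transpose, Pi.smul_apply, smul_eq_mul, ← hη' j] at hcr
    refine (mul_eq_zero.mp ?_).resolve_left hM0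
    rw [Matrix.sub_vecMul, Pi.sub_apply, mul_sub, sub_eq_zero]
    refine hcr.symm.trans ?_
    rw [Matrix.vecMul, dotProduct, Finset.mul_sum, Matrix.mulVec, dotProduct]
    refine Finset.sum_congr rfl fun i _ => ?_
    rw [hf i, hM, Matrix.transpose_apply, Matrix.of_apply]
    ring

lemma exists_basis_of_isCompl {W₁ W₂ : Submodule K (Fin 3 → K)} (h : IsCompl W₁ W₂)
    (h₁ : Module.finrank K W₁ = 2) (h₂ : Module.finrank K W₂ = 1) :
    ∃ b : Module.Basis (Fin 3) K (Fin 3 → K), (∀ c ∈ W₁, b.coord 2 c = 0) ∧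
      ∀ c ∈ W₂, b.coord 0 c = 0 ∧ b.coord 1 c = 0 := by
  let b₁ := Module.finBasisOfFinrankEq K W₁ h₁
  let b₂ := Module.finBasisOfFinrankEq K W₂ h₂
  let b := ((b₁.prod b₂).map (Submodule.prodEquivOfIsCompl W₁ W₂ h)).reindex
    (finSumFinEquiv : Fin 2 ⊕ Fin 1 ≃ Fin 3)
  refine ⟨b, fun c hc => ?_, fun c hc => ?_⟩
  · have h2 : (finSumFinEquiv : Fin 2 ⊕ Fin 1 ≃ Fin 3).symm 2 = Sum.inr 0 := rfl
    simp only [b, Module.Basis.coord_apply, Module.Basis.repr_reindex_apply, h2,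
      Module.Basis.map_repr, LinearEquiv.trans_apply]
    rw [Submodule.prodEquivOfIsCompl_symm_apply_left W₁ W₂ h ⟨c, hc⟩]
    simp
  · have h0 : (finSumFinEquiv : Fin 2 ⊕ Fin 1 ≃ Fin 3).symm 0 = Sum.inl 0 := rfl
    have h1 : (finSumFinEquiv : Fin 2 ⊕ Fin 1 ≃ Fin 3).symm 1 = Sum.inl 1 := rfl
    simp only [b, Module.Basis.coord_apply, Module.Basis.repr_reindex_apply, h0, h1,
      Module.Basis.map_repr, LinearEquiv.trans_apply]
    rw [Submodule.prodEquivOfIsCompl_symm_apply_right W₁ W₂ h ⟨c, hc⟩]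
    simp

lemma isFree_of_basis {A : Arrangement K 3} (m : (Fin 3 → K) → ℕ)
    (b : Module.Basis (Fin 3) K (Fin 3 → K))
    (hA : ∀ c ∈ A.hyps, b.coord 2 c = 0 ∨ b.coord 0 c = 0 ∧ b.coord 1 c = 0) : IsFree A m := by
  set ρ : (Fin 3 → K) →ₗ[K] (Fin 2 → K) := LinearMap.pi ![b.coord 0, b.coord 1] with hρ
  set τ : (Fin 2 → K) → (Fin 3 → K) := fun t => t 0 • b 0 + t 1 • b 1 with hτ
  set σ : S K 2 →ₐ[K] S K 3 := aeval ![linForm (b 0), linForm (b 1)] with hσ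
  have hστ : ∀ t, σ (linForm t) = linForm (τ t) := fun t => by
    rw [hσ, aeval_linForm, hτ, linForm_add, linForm_smul, linForm_smul, Fin.sum_univ_two]
    rfl
  have hexp : ∀ c, c = τ (ρ c) + b.coord 2 c • b 2 := fun c => by
    conv_lhs => rw [← b.sum_repr c, Fin.sum_univ_three]
    rfl
  have hcoord : ∀ i j, b.coord i (b j) = if j = i then 1 else 0 := fun i j => by
    rw [b.coord_apply, b.repr_self_apply]
  have hρ0 : ρ (b 0) = Pi.single 0 1 := by
    funext i
    fin_cases i <;> simp [hρ]
  have hρ1 : ρ (b 1) = Pi.single 1 1 := by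
    funext i
    fin_cases i <;> simp [hρ]
  have hρ2 : ρ (b 2) = 0 := by
    funext i
    fin_cases i <;> simp [hρ]
  set T₁ := A.hyps.filter fun c => b.coord 2 c = 0 with hT₁
  set T₂ := A.hyps.filter fun c => ¬ b.coord 2 c = 0 with hT₂
  have hτρ : ∀ c ∈ T₁, τ (ρ c) = c := fun c hc => by
    conv_rhs => rw [hexp c, (Finset.mem_filter.mp hc).2, zero_smul, add_zero]
  have hρT₂ : ∀ c ∈ T₂, ρ c = 0 := by
    intro c hc
    obtain ⟨hc, hc2⟩ := Finset.mem_filter.mp hc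
    obtain ⟨h0, h1⟩ := (hA c hc).resolve_left hc2
    funext i
    fin_cases i
    · exact h0
    · exact h1
  have hT₂eq : ∀ c ∈ T₂, c = b.coord 2 c • b 2 := fun c hc => by
    conv_lhs => rw [hexp c, hρT₂ c hc]
    simp [hτ]
  set n := ∑ c ∈ T₂, m c with hn
  have hnm : ∀ c ∈ T₂, n = m c := by
    intro c hc
    refine Finset.sum_eq_single_of_mem c hc fun c' hc' hne => ?_
    refine absurd ?_ (A.nonparallel c (Finset.mem_filter.mp hc).1 c' (Finset.mem_filter.mp hc').1
      hne.symm (b.coord 2 c' / b.coord 2 c))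
    calc c' = b.coord 2 c' • b 2 := hT₂eq c' hc'
      _ = (b.coord 2 c' / b.coord 2 c) • b.coord 2 c • b 2 := by
        rw [smul_smul, div_mul_cancel₀ _ (Finset.mem_filter.mp hc).2]
      _ = (b.coord 2 c' / b.coord 2 c) • c := by rw [← hT₂eq c hc]
  obtain ⟨φ₀, φ₁, d₀, d₁, hφ₀, hφ₁, hφ, k, hk, hdet⟩ := exists_isPlaneSaitoPair (T₁.image ρ)
    (by
      intro t ht
      obtain ⟨c, hc, rfl⟩ := Finset.mem_image.mp ht
      intro h0
      refine A.ne_zero c (Finset.mem_filter.mp hc).1 ?_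
      rw [← hτρ c hc, h0]
      simp [hτ]) (fun t => m (τ t))
  set ψ : (Fin 3 → K) →ₗ[K] S K 3 :=
    LinearMap.mulRight K (linForm (b 2) ^ n) ∘ₗ Algebra.linearMap K (S K 3) ∘ₗ b.coord 2
  set θ : Fin 3 → Der K 3 := ![derOf (σ.toLinearMap ∘ₗ φ₀ ∘ₗ ρ), derOf (σ.toLinearMap ∘ₗ φ₁ ∘ₗ ρ),
    derOf ψ] with hθ
  have hθ0 : ∀ c, θ 0 (linForm c) = σ (φ₀ (ρ c)) := fun c => derOf_linForm _ c
  have hθ1 : ∀ c, θ 1 (linForm c) = σ (φ₁ (ρ c)) := fun c => derOf_linForm _ c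
  have hθ2 : ∀ c, θ 2 (linForm c) = C (b.coord 2 c) * linForm (b 2) ^ n :=
    fun c => derOf_linForm _ c
  have hσhom : ∀ f d, f.IsHomogeneous d → (σ f).IsHomogeneous d := by
    intro f d hf
    have := hf.aeval (g := ![linForm (b 0), linForm (b 1)]) (n := 1) fun i => by
      fin_cases i <;> exact linForm_isHomogeneous _
    rwa [one_mul] at this
  have hlogσ : ∀ φ : (Fin 2 → K) →ₗ[K] S K 2,
      (∀ t ∈ T₁.image ρ, linForm t ^ m (τ t) ∣ φ t) →
      ∀ c ∈ A.hyps, linForm c ^ m c ∣ σ (φ (ρ c)) := by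
    intro φ hφ c hc
    by_cases hc2 : b.coord 2 c = 0
    · have hcT : c ∈ T₁ := Finset.mem_filter.mpr ⟨hc, hc2⟩
      have := map_dvd σ (hφ (ρ c) (Finset.mem_image_of_mem ρ hcT))
      rwa [map_pow, hστ, hτρ c hcT] at this
    · rw [hρT₂ c (Finset.mem_filter.mpr ⟨hc, hc2⟩), map_zero, map_zero]
      exact dvd_zero _
  have hlog : ∀ i, IsLogDer A m (θ i) := by
    intro i c hc
    fin_cases i
    · change _ ∣ θ 0 (linForm c)
      rw [hθ0]
      exact hlogσ φ₀ (fun t ht => (hφ t ht).1) c hc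
    · change _ ∣ θ 1 (linForm c)
      rw [hθ1]
      exact hlogσ φ₁ (fun t ht => (hφ t ht).2) c hc
    · change _ ∣ θ 2 (linForm c)
      rw [hθ2]
      by_cases hc2 : b.coord 2 c = 0
      · rw [hc2, map_zero, zero_mul]
        exact dvd_zero _
      · have hcT : c ∈ T₂ := Finset.mem_filter.mpr ⟨hc, hc2⟩
        rw [hnm c hcT]
        have hlin : linForm c = C (b.coord 2 c) * linForm (b 2) := by
          conv_lhs => rw [hT₂eq c hcT, linForm_smul]
        rw [hlin, mul_pow]
        exact (IsUnit.mul_left_dvd (((isUnit_iff_ne_zero.mpr hc2).map C).pow _)).mpr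
          (Dvd.intro_left _ rfl)
  have hprod₁ : σ (∏ t ∈ T₁.image ρ, linForm t ^ m (τ t)) = ∏ c ∈ T₁, linForm c ^ m c := by
    have hinj : Set.InjOn ρ T₁ := fun c hc c' hc' h => by rw [← hτρ c hc, ← hτρ c' hc', h]
    rw [Finset.prod_image hinj, map_prod]
    refine Finset.prod_congr rfl fun c hc => ?_
    rw [map_pow, hστ, hτρ c hc]
  set r : K := ∏ c ∈ T₂, b.coord 2 c ^ m c with hr
  have hr0 : r ≠ 0 := Finset.prod_ne_zero_iff.mpr fun c hc =>
    pow_ne_zero _ (Finset.mem_filter.mp hc).2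
  have hprod₂ : ∏ c ∈ T₂, linForm c ^ m c = C r * linForm (b 2) ^ n := by
    rw [hr, hn, map_prod, ← Finset.prod_pow_eq_pow_sum, ← Finset.prod_mul_distrib]
    refine Finset.prod_congr rfl fun c hc => ?_
    conv_lhs => rw [hT₂eq c hc, linForm_smul, mul_pow, ← hT₂eq c hc]
    rw [map_pow]
  have hprod : ∏ c ∈ A.hyps, linForm c ^ m c =
      (∏ c ∈ T₁, linForm c ^ m c) * (C r * linForm (b 2) ^ n) := by
    rw [← hprod₂, hT₁, hT₂, Finset.prod_filter_mul_prod_filter_not]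
  refine ⟨![d₀, d₁, n], θ, fun i c => ?_, isDerBasis_of_det hlog b (k := k / r)
    (div_ne_zero hk hr0) ?_⟩
  · fin_cases i
    · change (θ 0 (linForm c)).IsHomogeneous d₀
      rw [hθ0]
      exact hσhom _ _ (hφ₀ _)
    · change (θ 1 (linForm c)).IsHomogeneous d₁
      rw [hθ1]
      exact hσhom _ _ (hφ₁ _)
    · change (θ 2 (linForm c)).IsHomogeneous n
      rw [hθ2]
      exact (linForm_pow_isHomogeneous _ _).C_mul _
  · have hσdet := congrArg σ hdet
    rw [map_mul, hprod₁, map_sub, map_mul, map_mul] at hσdet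
    have hσC : σ (C k) = C k := σ.commutes k
    have hkr : (C k : S K 3) = C (k / r) * C r := by rw [← C_mul, div_mul_cancel₀ _ hr0]
    rw [hσC, hkr] at hσdet
    rw [Matrix.det_fin_three, hprod]
    simp only [Matrix.of_apply, hθ0, hθ1, hθ2, hρ0, hρ1, hρ2, hcoord, map_zero]
    simp only [Fin.isValue, Fin.reduceEq, if_false, if_true, map_zero, map_one]
    linear_combination linForm (b 2) ^ n * hσdet

lemma isFree_of_reducible {A : Arrangement K 3} (m : (Fin 3 → K) → ℕ) (h : Reducible A) :
    IsFree A m := by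
  obtain ⟨W₁, W₂, h₁, h₂, hinf, hsup, hA⟩ := h
  have hcompl : IsCompl W₁ W₂ := IsCompl.of_eq hinf hsup
  have hdim := Submodule.finrank_add_eq_of_isCompl hcompl
  rw [Module.finrank_fin_fun] at hdim
  have hpos₁ := Submodule.one_le_finrank_iff.mpr h₁
  have hpos₂ := Submodule.one_le_finrank_iff.mpr h₂
  obtain ⟨hd₁, hd₂⟩ | ⟨hd₁, hd₂⟩ : (Module.finrank K W₁ = 2 ∧ Module.finrank K W₂ = 1) ∨
      (Module.finrank K W₂ = 2 ∧ Module.finrank K W₁ = 1) := by omega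
  · obtain ⟨b, hb₁, hb₂⟩ := exists_basis_of_isCompl hcompl hd₁ hd₂
    exact isFree_of_basis m b fun c hc => (hA c hc).imp (hb₁ c) (hb₂ c)
  · obtain ⟨b, hb₁, hb₂⟩ := exists_basis_of_isCompl hcompl.symm hd₁ hd₂
    exact isFree_of_basis m b fun c hc => (hA c hc).symm.imp (hb₁ c) (hb₂ c)

theorem stmt13 (A : Arrangement K 3) (m : (Fin 3 → K) → ℕ)
    (hm : ∀ c ∈ A.hyps, 0 < m c) (cH cL : Fin 3 → K) (hne : cH ≠ cL)
    (hH : IsLocallyHeavy A m cH) (hL : IsLocallyHeavy A m cL) :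
    (¬ Reducible A → ¬ IsFree A m) ∧ (IsFree A m ↔ Reducible A) := by
  have hred : IsFree A m → Reducible A := reducible_of_isFree hm hne hH hL
  exact ⟨fun hirr hfree => hirr (hred hfree), hred, isFree_of_reducible m⟩

end ArrPaper
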